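/- For every $\alpha \in L$ one has $C(\alpha,\alpha) = 1$. -/

import Mathlib

/-- Folding a sum over `0, …, 2m` about its centre, keeping the term at `0` apart. -/
theorem sum_range_two_mul_add_one_fold (f : ℕ → ℤ) (m : ℕ) :
    ∑ j ∈ Finset.range (2 * m + 1), f j =
      f 0 + ∑ i ∈ Finset.range m, (f (i + 1) + f (2 * m + 1 - (i + 1))) := by
  rw [Finset.sum_range_succ', two_mul, Finset.sum_range_add, Finset.sum_add_distrib,
    ← Finset.sum_range_reflect (fun i => f (m + i + 1)) m, add_comm]
  congr 2
  refine Finset.sum_congr rfl fun i hi => congrArg f ?_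
  have := Finset.mem_range.mp hi
  omega

/-- Folding a sum over `0, …, 2m + 1`, keeping the terms at `0` and `m + 1` apart. -/
theorem sum_range_two_mul_add_two_fold (f : ℕ → ℤ) (m : ℕ) :
    ∑ j ∈ Finset.range (2 * m + 2), f j =
      f 0 + f (m + 1) +
        ∑ i ∈ Finset.range m, (f (i + 1) + f (2 * m + 2 - (i + 1))) := by
  rw [Finset.sum_range_succ', show 2 * m + 1 = (m + 1) + m by omega, Finset.sum_range_add,
    Finset.sum_range_succ, Finset.sum_add_distrib,
    ← Finset.sum_range_reflect (fun i => f (m + 1 + i + 1)) m]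
  have h : ∑ i ∈ Finset.range m, f (m + 1 + (m - 1 - i) + 1) =
      ∑ i ∈ Finset.range m, f (2 * m + 2 - (i + 1)) := by
    refine Finset.sum_congr rfl fun i hi => congrArg f ?_
    have := Finset.mem_range.mp hi
    omega
  rw [h]
  ring

/-- The sign and root-of-unity factors cancel for a sequence symmetric under `j ↦ k - j`. -/
theorem neg_one_zpow_mul_primitiveRoot_zpow_eq_one {k : ℕ} (hk : 0 < k) {η : ℂ}
    (hη : IsPrimitiveRoot η k) (b : ℕ → ℤ) (hb : ∀ j ≤ k, b (k - j) = b j) :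
    (-1 : ℂ) ^ (b 0 * b 0 + ∑ j ∈ Finset.range k, b j) *
      η ^ (∑ j ∈ Finset.range k, (j : ℤ) * b j) = 1 := by
  have h_even : Even (b 0 * b 0 + b 0) := by
    rw [← mul_add_one]
    exact Int.even_mul_succ_self _
  have hη0 : η ≠ 0 := hη.ne_zero hk.ne'
  have hηk (t : ℤ) : η ^ ((k : ℤ) * t) = 1 := by
    rw [zpow_mul, zpow_natCast, hη.pow_eq_one, one_zpow]
  have h_pair (m : ℕ) (hm : m < k) :
      ∑ i ∈ Finset.range m, (b (i + 1) + b (k - (i + 1))) =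
        2 * ∑ i ∈ Finset.range m, b (i + 1) ∧
      ∑ i ∈ Finset.range m,
          (((i + 1 : ℕ) : ℤ) * b (i + 1) + ((k - (i + 1) : ℕ) : ℤ) * b (k - (i + 1))) =
        k * ∑ i ∈ Finset.range m, b (i + 1) := by
    simp only [Finset.mul_sum]
    constructor <;> refine Finset.sum_congr rfl fun i hi => ?_
    all_goals
      have hi' : i + 1 ≤ k := by have := Finset.mem_range.mp hi; omega
      rw [hb _ hi']
    · ring
    · rw [Nat.cast_sub hi']
      ring
  obtain ⟨m, rfl | rfl⟩ : ∃ m, k = 2 * m + 1 ∨ k = 2 * m + 2 := ⟨(k - 1) / 2, by omega⟩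
  · obtain ⟨h₁, h₂⟩ := h_pair m (by omega)
    rw [sum_range_two_mul_add_one_fold b, sum_range_two_mul_add_one_fold (fun j => (j : ℤ) * b j),
      h₁, h₂, Nat.cast_zero, zero_mul, zero_add, hηk, mul_one, ← add_assoc]
    exact (h_even.add (even_two_mul _)).neg_one_zpow
  · obtain ⟨h₁, h₂⟩ := h_pair m (by omega)
    have h_half : η ^ (m + 1) = -1 :=
      (hη.pow hk (show 2 * m + 2 = (m + 1) * 2 by ring)).eq_neg_one_of_two_right
    rw [sum_range_two_mul_add_two_fold b, sum_range_two_mul_add_two_fold (fun j => (j : ℤ) * b j),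
      h₁, h₂, Nat.cast_zero, zero_mul, zero_add, zpow_add₀ hη0, hηk, mul_one, zpow_mul,
      zpow_natCast, h_half, ← zpow_add₀ (by norm_num)]
    refine Even.neg_one_zpow ?_
    obtain ⟨r, hr⟩ := h_even
    exact ⟨r + ∑ i ∈ Finset.range m, b (i + 1) + b (m + 1), by linear_combination hr⟩

theorem stmt_5 (L : Type*) [AddCommGroup L] [Module ℤ L]
    [Module.Free ℤ L] [Module.Finite ℤ L]
    (B : L →ₗ[ℤ] L →ₗ[ℤ] ℤ) (hsymm : ∀ a b : L, B a b = B b a)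
    (k : ℕ) (hk : 0 < k)
    (ν : L ≃ₗ[ℤ] L) (hiso : ∀ a b : L, B (ν a) (ν b) = B a b)
    (hper : ν ^ k = 1)
    (η : ℂ) (hη : IsPrimitiveRoot η k)
    (C : L → L → ℂ)
    (hC : ∀ a b : L, C a b =
      (-1 : ℂ) ^ (B a a * B b b + ∑ j ∈ Finset.range k, B ((ν ^ j) a) b) *
        η ^ (∑ j ∈ Finset.range k, (j : ℤ) * B ((ν ^ j) a) b)) :
    ∀ α : L, C α α = 1 := by
  intro α
  have h_iso_pow (j : ℕ) (a c : L) : B ((ν ^ j) a) ((ν ^ j) c) = B a c := by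
    induction j with
    | zero => simp
    | succ j ih => rw [pow_succ', LinearEquiv.mul_apply, LinearEquiv.mul_apply, hiso, ih]
  rw [hC]
  refine neg_one_zpow_mul_primitiveRoot_zpow_eq_one hk hη (fun j => B ((ν ^ j) α) α) fun j hj => ?_
  rw [← h_iso_pow j, ← LinearEquiv.mul_apply, ← pow_add, Nat.add_sub_cancel' hj, hper, hsymm]
  rfl
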